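/- arXiv:2211.04749 — 2 statements merged into one kernel-verified Lean document; each statement's English description precedes it below -/
import Mathlib

section
/- The number of partitions of a non-negative integer n into distinct parts with no two consecutive parts equals the number of partitions of n into parts congruent to 1 or 4 modulo 5. -/
/- Schur's proof. The generating polynomials of the sets of positive integers up to `n` without
consecutive elements satisfy `D (n + 2) = D (n + 1) + q ^ (n + 2) * D n`. So do the alternating sums
`∑ j, (-1) ^ j * q ^ (j * (5 * j + 1) / 2) * [n + 1, ⌊(n + 1 - 5 * j) / 2⌋]` of Gaussian binomial
coefficients, because the defect of the recurrence telescopes in `j`. As `n` grows, the binomial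
coefficients tend to `1 / ((1 - q) * (1 - q ^ 2) * ⋯)`, and what remains is a theta series, which
the Jacobi triple product turns into a product over the residues `0, 2, 3` modulo `5`. The factors
left in the denominator are those in the residues `1` and `4`.

The limits are first taken in a ring in which a power of `q` vanishes, where every infinite sum and
product is finite; power series enter through their quotients by powers of `X`. -/

open Finset Function

section FiniteSupport

variable {R : Type*} [AddCommMonoid R]

theorem hasFiniteSupport_of_natAbs {f : ℤ → R} (L : ℕ) (h : ∀ j, L < j.natAbs → f j = 0) :
    f.HasFiniteSupport := by
  refine (Set.finite_Icc (-(L : ℤ)) L).subset fun j hj ↦ ?_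
  have : j.natAbs ≤ L := not_lt.1 fun hL ↦ hj (h j hL)
  rw [Set.mem_Icc]
  omega

theorem hasFiniteSupport_comp_add_int {f : ℤ → R} (hf : f.HasFiniteSupport) (c : ℤ) :
    (fun j ↦ f (j + c)).HasFiniteSupport :=
  hf.comp_of_injective (add_left_injective c)

theorem finsum_comp_add_int (f : ℤ → R) (c : ℤ) : ∑ᶠ j, f (j + c) = ∑ᶠ j, f j :=
  finsum_comp_equiv (Equiv.addRight c)

end FiniteSupport

theorem prod_range_mul {M : Type*} [CommMonoid M] (f : ℕ → M) (k n : ℕ) :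
    ∏ i ∈ range (k * n), f i = ∏ r ∈ range k, ∏ i ∈ range n, f (k * i + r) := by
  induction n with
  | zero => simp
  | succ n ih => simp only [Nat.mul_succ, prod_range_add, prod_range_succ, ih, prod_mul_distrib]

section Triangular

/-- The triangular number `j * (j + 1) / 2` of an integer `j`; thus `triangular (-j)` is
`j * (j - 1) / 2`. -/
def triangular (j : ℤ) : ℕ :=
  (j * (j + 1) / 2).toNat

theorem two_mul_triangular (j : ℤ) : 2 * (triangular j : ℤ) = j * (j + 1) := by
  have h : 0 ≤ j * (j + 1) := by
    rcases lt_or_ge j 0 with hj | hj <;> nlinarith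
  rw [triangular, Int.toNat_of_nonneg (by positivity),
    Int.mul_ediv_cancel' (Int.even_mul_succ_self j).two_dvd]

theorem triangular_add_one (j : ℤ) : (triangular (j + 1) : ℤ) = triangular j + (j + 1) := by
  linarith [two_mul_triangular j, two_mul_triangular (j + 1)]

theorem triangular_neg_add_one (j : ℤ) : (triangular (-(j + 1)) : ℤ) = triangular (-j) + j := by
  linarith [two_mul_triangular (-j), two_mul_triangular (-(j + 1))]

theorem natAbs_le_triangular_add_one (j : ℤ) : j.natAbs ≤ triangular j + 1 := by
  have h := two_mul_triangular j
  zify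
  rcases lt_or_ge j 0 with hj | hj
  · rw [abs_of_neg hj]; nlinarith
  · rw [abs_of_nonneg hj]; nlinarith

end Triangular

variable {R : Type*} [CommRing R]

section Theta

/-- The `j`-th term `(-1) ^ j * a ^ (j * (j + 1) / 2) * b ^ (j * (j - 1) / 2)` of the bilateral
series defining Ramanujan's theta function `f(-a, -b)`. -/
def thetaTerm (a b : R) (j : ℤ) : R :=
  ((j.negOnePow : ℤ) : R) * a ^ triangular j * b ^ triangular (-j)

theorem thetaTerm_zero (a b : R) : thetaTerm a b 0 = 1 := by
  simp [thetaTerm, triangular]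

theorem thetaTerm_add_one_mul (a b : R) (j : ℤ) {x x' y y' : ℕ} (hx : (x' : ℤ) = x + (j + 1))
    (hy : (y' : ℤ) = y + j) :
    thetaTerm a b (j + 1) * (a ^ x * b ^ y) = -(thetaTerm a b j * (a ^ x' * b ^ y')) := by
  have ha : a ^ triangular (j + 1) * a ^ x = a ^ triangular j * a ^ x' := by
    rw [← pow_add, ← pow_add]
    congr 1
    have := triangular_add_one j
    omega
  have hb : b ^ triangular (-(j + 1)) * b ^ y = b ^ triangular (-j) * b ^ y' := by
    rw [← pow_add, ← pow_add]
    congr 1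
    have := triangular_neg_add_one j
    omega
  simp only [thetaTerm, Int.negOnePow_succ, Units.val_neg, Int.cast_neg]
  linear_combination (-((j.negOnePow : ℤ) : R)) * (a ^ triangular j * a ^ x' * hb +
    b ^ triangular (-(j + 1)) * b ^ y * ha)

theorem thetaTerm_pow_pow_add_one_mul (q : R) (r s : ℕ) (j : ℤ) {x x' : ℕ}
    (hx : (x' : ℤ) = x + (r * (j + 1) + s * j)) :
    thetaTerm (q ^ r) (q ^ s) (j + 1) * q ^ x = -(thetaTerm (q ^ r) (q ^ s) j * q ^ x') := by
  have h : r * triangular (j + 1) + s * triangular (-(j + 1)) + x =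
      r * triangular j + s * triangular (-j) + x' := by
    zify
    rw [triangular_add_one, triangular_neg_add_one, hx]
    ring
  simp only [thetaTerm, Int.negOnePow_succ, Units.val_neg, Int.cast_neg, ← pow_mul]
  linear_combination (-((j.negOnePow : ℤ) : R)) * congrArg (q ^ ·) h

theorem thetaTerm_eq_zero {a b : R} {m : ℕ} (h : (a * b) ^ m = 0) {j : ℤ} (hj : m < j.natAbs) :
    thetaTerm a b j = 0 := by
  have ha := natAbs_le_triangular_add_one j
  have hb := natAbs_le_triangular_add_one (-j)
  rw [thetaTerm, mul_assoc, ← Nat.add_sub_of_le (show m ≤ triangular j by omega),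
    ← Nat.add_sub_of_le (show m ≤ triangular (-j) by omega), pow_add, pow_add, mul_mul_mul_comm,
    ← mul_pow, h, zero_mul, mul_zero]

end Theta

section QPochhammer

/-- The finite `q`-Pochhammer symbol `(a; q)_n`. -/
def qPochhammer (a q : R) (n : ℕ) : R :=
  ∏ i ∈ range n, (1 - a * q ^ i)

variable (a q : R)

theorem qPochhammer_zero : qPochhammer a q 0 = 1 :=
  prod_range_zero _

theorem qPochhammer_succ (n : ℕ) :
    qPochhammer a q (n + 1) = qPochhammer a q n * (1 - a * q ^ n) :=
  prod_range_succ _ _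

theorem qPochhammer_mul (k n : ℕ) :
    qPochhammer a q (k * n) = ∏ r ∈ range k, qPochhammer (a * q ^ r) (q ^ k) n := by
  simp only [qPochhammer, prod_range_mul, mul_assoc, ← pow_mul, ← pow_add, add_comm]

theorem map_qPochhammer {S : Type*} [CommRing S] (φ : R →+* S) (n : ℕ) :
    φ (qPochhammer a q n) = qPochhammer (φ a) (φ q) n := by
  simp [qPochhammer]

variable {a q}

theorem isUnit_qPochhammer (ha : IsNilpotent a) (n : ℕ) : IsUnit (qPochhammer a q n) := by
  induction n with
  | zero => simp [qPochhammer_zero]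
  | succ n ih =>
    rw [qPochhammer_succ]
    exact ih.mul ((Commute.all a _).isNilpotent_mul_right ha).isUnit_one_sub

theorem qPochhammer_eq_of_le {m n : ℕ} (hq : q ^ m = 0) (h : m ≤ n) :
    qPochhammer a q n = qPochhammer a q m := by
  induction n, h using Nat.le_induction with
  | base => rfl
  | succ n hn ih =>
    rw [qPochhammer_succ, ih, pow_eq_zero_of_le hn hq, mul_zero, sub_zero, mul_one]

end QPochhammer

section GaussBinom

variable (q : R)

/-- The Gaussian binomial coefficient evaluated at `q`. The lower index is an integer, so that
Pascal's rule holds without side conditions; the coefficient vanishes unless `0 ≤ k ≤ n`. -/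
def gaussBinom : ℕ → ℤ → R
  | 0, k => if k = 0 then 1 else 0
  | n + 1, k => gaussBinom n (k - 1) + q ^ k.toNat * gaussBinom n k

theorem gaussBinom_zero_zero : gaussBinom q 0 0 = 1 :=
  if_pos rfl

theorem gaussBinom_succ (n : ℕ) (k : ℤ) :
    gaussBinom q (n + 1) k = gaussBinom q n (k - 1) + q ^ k.toNat * gaussBinom q n k :=
  rfl

theorem gaussBinom_of_neg (n : ℕ) {k : ℤ} (hk : k < 0) : gaussBinom q n k = 0 := by
  induction n generalizing k with
  | zero => exact if_neg hk.ne
  | succ n ih => rw [gaussBinom_succ, ih hk, ih (by omega), mul_zero, add_zero]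

theorem gaussBinom_of_lt (n : ℕ) {k : ℤ} (hk : n < k) : gaussBinom q n k = 0 := by
  induction n generalizing k with
  | zero => exact if_neg hk.ne'
  | succ n ih => rw [gaussBinom_succ, ih (by omega), ih (by omega), mul_zero, add_zero]

theorem gaussBinom_zero_right (n : ℕ) : gaussBinom q n 0 = 1 := by
  induction n with
  | zero => exact gaussBinom_zero_zero q
  | succ n ih => simp [gaussBinom_succ, ih, gaussBinom_of_neg]

theorem gaussBinom_self (n : ℕ) : gaussBinom q n n = 1 := by
  induction n with
  | zero => exact gaussBinom_zero_zero q
  | succ n ih => simp [gaussBinom_succ, ih, gaussBinom_of_lt]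

variable {q} in
theorem mul_gaussBinom_congr {x y : R} {n : ℕ} {k : ℤ} (h : 0 ≤ k → k ≤ n → x = y) :
    x * gaussBinom q n k = y * gaussBinom q n k := by
  rcases lt_or_ge k 0 with hk | hk
  · rw [gaussBinom_of_neg q n hk, mul_zero, mul_zero]
  rcases lt_or_ge (n : ℤ) k with hk' | hk'
  · rw [gaussBinom_of_lt q n hk', mul_zero, mul_zero]
  rw [h hk hk']

theorem pow_mul_pow_mul_gaussBinom {n : ℕ} {k : ℤ} {c d e : ℕ}
    (h : 0 ≤ k → k ≤ n → c + d = e) :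
    q ^ c * (q ^ d * gaussBinom q n k) = q ^ e * gaussBinom q n k := by
  rw [← mul_assoc, ← pow_add]
  exact mul_gaussBinom_congr fun hk hk' ↦ by rw [h hk hk']

theorem gaussBinom_succ' (n : ℕ) (k : ℤ) :
    gaussBinom q (n + 1) k = q ^ (n + 1 - k).toNat * gaussBinom q n (k - 1) + gaussBinom q n k := by
  induction n generalizing k with
  | zero =>
    rcases lt_trichotomy k 0 with hk | rfl | hk
    · simp [gaussBinom_of_neg, hk, show k - 1 < 0 by omega]
    · simp [gaussBinom_zero_right, gaussBinom_of_neg]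
    · obtain rfl | hk' := (show 1 ≤ k from hk).eq_or_lt
      · simp [gaussBinom_succ, gaussBinom_of_lt]
      · simp [gaussBinom_of_lt, hk, hk']
  | succ n ih =>
    have hcomm : q ^ k.toNat * (q ^ (n + 1 - k).toNat * gaussBinom q n (k - 1)) =
        q ^ ((n + 1 : ℕ) + 1 - k).toNat * (q ^ (k - 1).toNat * gaussBinom q n (k - 1)) := by
      simp only [← mul_assoc, ← pow_add]
      exact mul_gaussBinom_congr fun _ _ ↦ congrArg _ (by omega)
    have ih' := ih (k - 1)
    rw [show (n : ℤ) + 1 - (k - 1) = (n + 1 : ℕ) + 1 - k by push_cast; ring] at ih'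
    linear_combination gaussBinom_succ q (n + 1) k + ih' + q ^ k.toNat * ih k + hcomm
      - q ^ ((n + 1 : ℕ) + 1 - k).toNat * gaussBinom_succ q n (k - 1) - gaussBinom_succ q n k

theorem gaussBinom_add_two (n : ℕ) (k : ℤ) :
    gaussBinom q (n + 2) k = gaussBinom q (n + 1) k + q ^ (n + 1) * gaussBinom q n (k - 1) +
      q ^ (n + 2 - k).toNat * gaussBinom q n (k - 2) := by
  have hpow : q ^ (n + 2 - k).toNat * (q ^ (k - 1).toNat * gaussBinom q n (k - 1)) =
      q ^ (n + 1) * gaussBinom q n (k - 1) :=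
    pow_mul_pow_mul_gaussBinom q fun _ _ ↦ by omega
  rw [gaussBinom_succ' q (n + 1), gaussBinom_succ q n (k - 1), show k - 1 - 1 = k - 2 by ring,
    show ((n + 1 : ℕ) : ℤ) + 1 - k = n + 2 - k by push_cast; ring]
  linear_combination hpow

theorem gaussBinom_add_two' (n : ℕ) (k : ℤ) :
    gaussBinom q (n + 2) (k + 1) = gaussBinom q (n + 1) k + q ^ (n + 1) * gaussBinom q n k +
      q ^ (k + 1).toNat * gaussBinom q n (k + 1) := by
  have hpow : q ^ (k + 1).toNat * (q ^ (n - k).toNat * gaussBinom q n k) =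
      q ^ (n + 1) * gaussBinom q n k :=
    pow_mul_pow_mul_gaussBinom q fun _ _ ↦ by omega
  rw [gaussBinom_succ q (n + 1), gaussBinom_succ' q n (k + 1), add_sub_cancel_right,
    add_sub_add_right_eq_sub]
  linear_combination hpow

theorem gaussBinom_mul_qPochhammer (a b : ℕ) :
    gaussBinom q (a + b) a * qPochhammer q q a * qPochhammer q q b = qPochhammer q q (a + b) := by
  induction h : a + b generalizing a b with
  | zero =>
    obtain ⟨rfl, rfl⟩ : a = 0 ∧ b = 0 := by omega
    simp [gaussBinom_zero_zero, qPochhammer_zero]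
  | succ n ih =>
    rcases a with _ | a
    · obtain rfl : b = n + 1 := by omega
      simp [gaussBinom_zero_right, qPochhammer_zero]
    rcases b with _ | b
    · obtain rfl : a = n := by omega
      rw [gaussBinom_self, qPochhammer_zero, one_mul, mul_one]
    obtain rfl : n = a + b + 1 := by omega
    have ha := ih a (b + 1) (by omega)
    have hb := ih (a + 1) b (by omega)
    rw [qPochhammer_succ] at ha hb
    rw [gaussBinom_succ, Int.toNat_natCast, show ((a + 1 : ℕ) : ℤ) - 1 = a by simp,
      qPochhammer_succ q q (a + b + 1), qPochhammer_succ, qPochhammer_succ]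
    linear_combination (1 - q * q ^ a) * ha + q ^ (a + 1) * (1 - q * q ^ b) * hb

variable {q} in
theorem gaussBinom_mul_qPochhammer_eq_one {m n N : ℕ} {k : ℤ} (hq : q ^ m = 0) (hN : m ≤ N)
    (hk : m ≤ k) (hk' : k + m ≤ n) : gaussBinom q n k * qPochhammer q q N = 1 := by
  obtain ⟨a, rfl⟩ := Int.eq_ofNat_of_zero_le (show 0 ≤ k by omega)
  obtain ⟨b, rfl⟩ := Nat.exists_eq_add_of_le (show a ≤ n by omega)
  have h := gaussBinom_mul_qPochhammer q a b
  rw [qPochhammer_eq_of_le hq (show m ≤ a by omega), qPochhammer_eq_of_le hq (show m ≤ b by omega),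
    qPochhammer_eq_of_le hq (show m ≤ a + b by omega)] at h
  rw [qPochhammer_eq_of_le hq hN]
  exact (isUnit_qPochhammer ⟨m, hq⟩ m).mul_right_cancel (by rw [h, one_mul])

end GaussBinom

section JacobiTripleProduct

variable (a b : R)

/-- The summands of the finite Jacobi triple product, which tend to `thetaTerm a b j` divided by
`(ab; ab)_∞` as `n` grows. -/
def tripleTerm (n : ℕ) (j : ℤ) : R :=
  thetaTerm a b j * gaussBinom (a * b) (2 * n) (n + j)

theorem tripleTerm_eq_zero {n : ℕ} {j : ℤ} (hj : n < j.natAbs) : tripleTerm a b n j = 0 := by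
  rw [tripleTerm]
  rcases lt_or_ge j 0 with h | h
  · rw [gaussBinom_of_neg _ _ (by omega), mul_zero]
  · rw [gaussBinom_of_lt _ _ (by omega), mul_zero]

theorem hasFiniteSupport_tripleTerm (n : ℕ) : (tripleTerm a b n).HasFiniteSupport :=
  hasFiniteSupport_of_natAbs n fun _ ↦ tripleTerm_eq_zero a b

theorem tripleTerm_succ (n : ℕ) (j : ℤ) :
    tripleTerm a b (n + 1) j = (1 + (a * b) ^ (2 * n + 1)) * tripleTerm a b n j
      + -(a ^ (n + 1) * b ^ n) * tripleTerm a b n (j + -1)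
      + -(a ^ n * b ^ (n + 1)) * tripleTerm a b n (j + 1) := by
  have hprev : thetaTerm a b j * (a * b) ^ (n + 1 - j).toNat *
        gaussBinom (a * b) (2 * n) (n + (j + -1)) =
      -(thetaTerm a b (j + -1) * (a ^ (n + 1) * b ^ n)) *
        gaussBinom (a * b) (2 * n) (n + (j + -1)) :=
    mul_gaussBinom_congr fun _ _ ↦ by
      simpa [mul_pow] using thetaTerm_add_one_mul a b (j + -1) (x := (n + 1 - j).toNat)
        (x' := n + 1) (y := (n + 1 - j).toNat) (y' := n) (by omega) (by omega)
  have hnext : thetaTerm a b j * (a * b) ^ (n + j + 1).toNat *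
        gaussBinom (a * b) (2 * n) (n + (j + 1)) =
      -(thetaTerm a b (j + 1) * (a ^ n * b ^ (n + 1))) *
        gaussBinom (a * b) (2 * n) (n + (j + 1)) :=
    mul_gaussBinom_congr fun _ _ ↦ by
      rw [mul_pow, thetaTerm_add_one_mul a b j (x' := (n + j + 1).toNat) (y' := (n + j + 1).toNat)
        (by omega) (by omega), neg_neg]
  rw [tripleTerm, Nat.mul_succ, show ((n + 1 : ℕ) : ℤ) + j = n + j + 1 by push_cast; ring,
    gaussBinom_add_two', gaussBinom_succ', show ((2 * n : ℕ) : ℤ) + 1 - (n + j) = n + 1 - j by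
    push_cast; ring]
  simp only [← add_assoc, ← sub_eq_add_neg, ← add_sub_assoc, tripleTerm] at hprev hnext ⊢
  linear_combination hprev + hnext

theorem finsum_tripleTerm (n : ℕ) :
    ∑ᶠ j, tripleTerm a b n j = qPochhammer a (a * b) n * qPochhammer b (a * b) n := by
  induction n with
  | zero =>
    rw [finsum_eq_single _ 0 fun j hj ↦ tripleTerm_eq_zero a b (by omega)]
    simp [tripleTerm, thetaTerm_zero, gaussBinom_zero_zero, qPochhammer_zero]
  | succ n ih =>
    have hs := hasFiniteSupport_tripleTerm a b n
    have hs' := hasFiniteSupport_comp_add_int hs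
    have hmul (c : R) : (fun j ↦ c * tripleTerm a b n j).HasFiniteSupport :=
      hs.mul_right fun _ ↦ c
    have hmul' (c : R) (d : ℤ) : (fun j ↦ c * tripleTerm a b n (j + d)).HasFiniteSupport :=
      (hs' d).mul_right fun _ ↦ c
    rw [finsum_congr (tripleTerm_succ a b n),
      finsum_add_distrib ((hmul _).fun_add (hmul' _ _)) (hmul' _ _),
      finsum_add_distrib (hmul _) (hmul' _ _), ← mul_finsum' _ _ hs, ← mul_finsum' _ _ (hs' _),
      ← mul_finsum' _ _ (hs' _), finsum_comp_add_int, finsum_comp_add_int, ih, qPochhammer_succ,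
      qPochhammer_succ]
    ring

variable {a b}

theorem jacobi_triple_product_of_pow_eq_zero {m n N : ℕ} (h : (a * b) ^ m = 0) (hn : 2 * m ≤ n)
    (hN : m ≤ N) :
    qPochhammer a (a * b) n * qPochhammer b (a * b) n * qPochhammer (a * b) (a * b) N =
      ∑ᶠ j, thetaTerm a b j := by
  rw [← finsum_tripleTerm, finsum_mul' _ _ (hasFiniteSupport_tripleTerm a b n)]
  refine finsum_congr fun j ↦ ?_
  rcases lt_or_ge m j.natAbs with hj | hj
  · rw [tripleTerm, thetaTerm_eq_zero h hj, zero_mul, zero_mul]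
  · rw [tripleTerm, mul_assoc, gaussBinom_mul_qPochhammer_eq_one h hN (by omega) (by omega),
      mul_one]

end JacobiTripleProduct

section SchurSum

variable (q : R)

/-- The summands of Schur's polynomials, which tend to the terms of the theta series divided by
`(q; q)_∞` as `n` grows. -/
def schurTerm (n : ℕ) (j : ℤ) : R :=
  thetaTerm (q ^ 3) (q ^ 2) j * gaussBinom q n ((n - 5 * j) / 2)

/-- Schur's polynomials `∑ (-1) ^ j * q ^ (j * (5 * j + 1) / 2) * [n, ⌊(n - 5 * j) / 2⌋]`,
evaluated at `q`. -/
noncomputable def schurSum (n : ℕ) : R :=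
  ∑ᶠ j, schurTerm q n j

/-- The certificate for the recurrence `schurSum_add_two`: replacing each `schurSum` there by its
`j`-th summand leaves the defect `schurCert q n j - schurCert q n (j - 1)`. -/
def schurCert (n : ℕ) (j : ℤ) : R :=
  if (n + 1 - 5 * j) % 2 = 0 then
    thetaTerm (q ^ 3) (q ^ 2) j * (q ^ (n + 2 - (n + 1 - 5 * j) / 2).toNat *
      gaussBinom q n ((n + 1 - 5 * j) / 2 - 2))
  else 0

variable {q} in
theorem schurTerm_of_eq {n : ℕ} {j k : ℤ} (h : n - 5 * j = 2 * k ∨ n - 5 * j = 2 * k + 1) :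
    schurTerm q n j = thetaTerm (q ^ 3) (q ^ 2) j * gaussBinom q n k := by
  rw [schurTerm, show (n - 5 * j) / 2 = k by omega]

variable {q} in
theorem schurCert_of_even {n : ℕ} {j k : ℤ} (h : n + 1 - 5 * j = 2 * k) :
    schurCert q n j =
      thetaTerm (q ^ 3) (q ^ 2) j * (q ^ (n + 2 - k).toNat * gaussBinom q n (k - 2)) := by
  rw [schurCert, if_pos (by omega), show (n + 1 - 5 * j) / 2 = k by omega]

variable {q} in
theorem schurCert_of_odd {n : ℕ} {j k : ℤ} (h : n + 1 - 5 * j = 2 * k + 1) :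
    schurCert q n j = 0 :=
  if_neg (by omega)

theorem schurTerm_eq_zero {n : ℕ} {j : ℤ} (hj : n < j.natAbs) : schurTerm q n j = 0 := by
  rw [schurTerm]
  rcases lt_or_ge j 0 with h | h
  · rw [gaussBinom_of_lt _ _ (by omega), mul_zero]
  · rw [gaussBinom_of_neg _ _ (by omega), mul_zero]

theorem schurCert_eq_zero {n : ℕ} {j : ℤ} (hj : n + 2 < j.natAbs) : schurCert q n j = 0 := by
  obtain ⟨k, hk | hk⟩ := Int.even_or_odd' (n + 1 - 5 * j)
  · rw [schurCert_of_even hk]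
    rcases lt_or_ge j 0 with h | h
    · rw [gaussBinom_of_lt _ _ (by omega), mul_zero, mul_zero]
    · rw [gaussBinom_of_neg _ _ (by omega), mul_zero, mul_zero]
  · exact schurCert_of_odd hk

theorem hasFiniteSupport_schurTerm (n : ℕ) : (schurTerm q n).HasFiniteSupport :=
  hasFiniteSupport_of_natAbs n fun _ ↦ schurTerm_eq_zero q

theorem hasFiniteSupport_schurCert (n : ℕ) : (schurCert q n).HasFiniteSupport :=
  hasFiniteSupport_of_natAbs (n + 2) fun _ ↦ schurCert_eq_zero q

theorem schurTerm_add_two (n : ℕ) (j : ℤ) :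
    schurTerm q (n + 2) j + schurCert q n (j + -1) =
      schurTerm q (n + 1) j + q ^ (n + 1) * schurTerm q n j + schurCert q n j := by
  obtain ⟨k, hk | hk⟩ := Int.even_or_odd' (n + 1 - 5 * j)
  · rw [schurTerm_of_eq (k := k) (by omega), schurTerm_of_eq (k := k) (by omega),
      schurTerm_of_eq (k := k - 1) (by omega), schurCert_of_even hk,
      schurCert_of_odd (k := k + 2) (by omega), gaussBinom_add_two]
    ring
  · rw [schurTerm_of_eq (k := k + 1) (by omega), schurTerm_of_eq (k := k) (by omega),
      schurTerm_of_eq (k := k) (by omega), schurCert_of_odd hk,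
      schurCert_of_even (k := k + 3) (by omega), gaussBinom_add_two',
      show k + 3 - 2 = k + 1 by ring]
    have htheta : thetaTerm (q ^ 3) (q ^ 2) j * q ^ (k + 1).toNat * gaussBinom q n (k + 1) =
        -(thetaTerm (q ^ 3) (q ^ 2) (j + -1) * q ^ (n + 2 - (k + 3)).toNat) *
          gaussBinom q n (k + 1) :=
      mul_gaussBinom_congr fun _ _ ↦ by
        simpa using thetaTerm_pow_pow_add_one_mul q 3 2 (j + -1) (x := (k + 1).toNat)
          (x' := (n + 2 - (k + 3)).toNat) (by push_cast; omega)
    linear_combination htheta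

theorem schurSum_zero : schurSum q 0 = 1 := by
  rw [schurSum, finsum_eq_single _ 0 fun j hj ↦ schurTerm_eq_zero q (by omega)]
  simp [schurTerm, thetaTerm_zero, gaussBinom_zero_zero]

theorem schurSum_one : schurSum q 1 = 1 := by
  rw [schurSum, finsum_eq_single _ 0 fun j hj ↦ ?_]
  · simp [schurTerm, thetaTerm_zero, gaussBinom_zero_right]
  · rw [schurTerm]
    rcases lt_or_ge j 0 with h | h
    · rw [gaussBinom_of_lt _ _ (by omega), mul_zero]
    · rw [gaussBinom_of_neg _ _ (by omega), mul_zero]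

theorem schurSum_add_two (n : ℕ) :
    schurSum q (n + 2) = schurSum q (n + 1) + q ^ (n + 1) * schurSum q n := by
  have hterm := hasFiniteSupport_schurTerm q
  have hcert := hasFiniteSupport_schurCert q n
  have hmul : (fun j ↦ q ^ (n + 1) * schurTerm q n j).HasFiniteSupport :=
    (hterm n).mul_right fun _ ↦ q ^ (n + 1)
  have h := finsum_congr (schurTerm_add_two q n)
  rw [finsum_add_distrib (hterm _) (hasFiniteSupport_comp_add_int hcert _),
    finsum_add_distrib ((hterm _).fun_add hmul) hcert, finsum_add_distrib (hterm _) hmul,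
    ← mul_finsum' _ _ (hterm n), finsum_comp_add_int] at h
  exact add_right_cancel h

variable {q}

theorem schurSum_mul_qPochhammer {m n N : ℕ} (hq : q ^ m = 0) (hn : 7 * m ≤ n) (hN : m ≤ N) :
    schurSum q n * qPochhammer q q N = ∑ᶠ j, thetaTerm (q ^ 3) (q ^ 2) j := by
  rw [schurSum, finsum_mul' _ _ (hasFiniteSupport_schurTerm q n)]
  refine finsum_congr fun j ↦ ?_
  rcases lt_or_ge m j.natAbs with hj | hj
  · have hq' : (q ^ 3 * q ^ 2) ^ m = 0 := by
      rw [← pow_add, pow_right_comm, hq, zero_pow (by norm_num)]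
    rw [schurTerm, thetaTerm_eq_zero hq' hj, zero_mul, zero_mul]
  · rw [schurTerm, mul_assoc, gaussBinom_mul_qPochhammer_eq_one hq hN (by omega) (by omega),
      mul_one]

theorem schurSum_mul_qPochhammer_mul_qPochhammer {m n N : ℕ} (hq : q ^ m = 0) (hn : 7 * m ≤ n)
    (hN : 2 * m ≤ N) :
    schurSum q n * (qPochhammer q (q ^ 5) N * qPochhammer (q ^ 4) (q ^ 5) N) = 1 := by
  have hpow : q ^ 3 * q ^ 2 = q ^ 5 := (pow_add q 3 2).symm
  have hnil (k : ℕ) : IsNilpotent (q ^ (k + 1)) := IsNilpotent.pow_succ k ⟨m, hq⟩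
  have hq' : (q ^ 3 * q ^ 2) ^ m = 0 := by
    rw [hpow, pow_right_comm, hq, zero_pow (by norm_num)]
  have hunit := ((isUnit_qPochhammer (q := q ^ 5) (hnil 2) N).mul
    (isUnit_qPochhammer (q := q ^ 5) (hnil 1) N)).mul (isUnit_qPochhammer (q := q ^ 5) (hnil 4) N)
  have hsplit : qPochhammer q q (5 * N) =
      qPochhammer q (q ^ 5) N * qPochhammer (q ^ 4) (q ^ 5) N *
        (qPochhammer (q ^ 3) (q ^ 5) N * qPochhammer (q ^ 2) (q ^ 5) N *
          qPochhammer (q ^ 5) (q ^ 5) N) := by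
    rw [qPochhammer_mul]
    simp only [prod_range_succ, prod_range_zero, ← pow_succ', zero_add, pow_one, one_mul]
    ring
  have htheta := jacobi_triple_product_of_pow_eq_zero hq' hN (show m ≤ N by omega)
  rw [← schurSum_mul_qPochhammer hq hn (show m ≤ 5 * N by omega), hsplit, hpow] at htheta
  refine hunit.mul_right_cancel ?_
  rw [mul_assoc, ← htheta, one_mul]

end SchurSum

section GapSets

/-- The subsets of `{1, …, n}` without two consecutive elements, that is, the partitions into
distinct and non-consecutive parts of size at most `n`. -/
def gapSets (n : ℕ) : Finset (Finset ℕ) :=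
  (Icc 1 n).powerset.filter fun s ↦ ∀ a ∈ s, a + 1 ∉ s

theorem mem_gapSets {n : ℕ} {s : Finset ℕ} :
    s ∈ gapSets n ↔ (∀ a ∈ s, 1 ≤ a ∧ a ≤ n) ∧ ∀ a ∈ s, a + 1 ∉ s := by
  simp [gapSets, subset_iff]

theorem notMem_of_mem_gapSets {n a : ℕ} {s : Finset ℕ} (hs : s ∈ gapSets n) (ha : n < a) :
    a ∉ s :=
  fun h ↦ ha.not_ge ((mem_gapSets.1 hs).1 a h).2

theorem gapSets_add_two (n : ℕ) :
    gapSets (n + 2) = gapSets (n + 1) ∪ (gapSets n).image (insert (n + 2)) := by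
  ext s
  simp only [mem_union, mem_image, mem_gapSets]
  constructor
  · rintro ⟨hle, hgap⟩
    by_cases hs : n + 2 ∈ s
    · refine Or.inr ⟨s.erase (n + 2), ⟨fun a ha ↦ ?_, fun a ha h ↦ ?_⟩, insert_erase hs⟩
      · rw [mem_erase] at ha
        have := hle a ha.2
        have : a ≠ n + 1 := by rintro rfl; exact hgap _ ha.2 hs
        omega
      · exact hgap a (mem_of_mem_erase ha) (mem_of_mem_erase h)
    · refine Or.inl ⟨fun a ha ↦ ?_, hgap⟩
      have := hle a ha
      have : a ≠ n + 2 := by rintro rfl; exact hs ha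
      omega
  · rintro (⟨hle, hgap⟩ | ⟨t, ⟨hle, hgap⟩, rfl⟩)
    · exact ⟨fun a ha ↦ by have := hle a ha; omega, hgap⟩
    · constructor <;> intro a ha <;> grind

theorem sum_gapSets_add_two {M : Type*} [AddCommMonoid M] (f : Finset ℕ → M) (n : ℕ) :
    ∑ s ∈ gapSets (n + 2), f s =
      ∑ s ∈ gapSets (n + 1), f s + ∑ s ∈ gapSets n, f (insert (n + 2) s) := by
  rw [gapSets_add_two, sum_union, sum_image]
  · intro s hs t ht h
    rw [← erase_insert (notMem_of_mem_gapSets hs (by omega : n < n + 2)), h,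
      erase_insert (notMem_of_mem_gapSets ht (by omega))]
  · rw [disjoint_left]
    intro s hs hs'
    obtain ⟨t, -, rfl⟩ := mem_image.1 hs'
    exact notMem_of_mem_gapSets hs (by omega) (mem_insert_self (n + 2) t)

theorem sum_gapSets_pow_sum (q : R) (n : ℕ) :
    ∑ s ∈ gapSets n, q ^ (∑ a ∈ s, a) = schurSum q (n + 1) := by
  induction n using Nat.twoStepInduction with
  | zero =>
    rw [show gapSets 0 = {∅} by decide, schurSum_one]
    simp
  | one =>
    rw [show gapSets 1 = {∅, {1}} by decide, schurSum_add_two, schurSum_one, schurSum_zero]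
    simp
  | more n ih ih' =>
    rw [sum_gapSets_add_two, ih', schurSum_add_two q (n + 1), ← ih, mul_sum]
    refine congrArg _ (sum_congr rfl fun s hs ↦ ?_)
    rw [sum_insert (notMem_of_mem_gapSets hs (by omega)), pow_add]

theorem card_filter_gapSets_sum_eq {n N : ℕ} (hN : n ≤ N) :
    ((gapSets N).filter fun s ↦ ∑ a ∈ s, a = n).card =
      Set.ncard {p : n.Partition | p.parts.Nodup ∧ ∀ a ∈ p.parts, ∀ b ∈ p.parts, a ≠ b + 1} := by
  rw [← Set.ncard_coe_finset, eq_comm]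
  refine Set.ncard_congr (fun p _ ↦ p.parts.toFinset) ?_ ?_ ?_
  · rintro p ⟨hnodup, hgap⟩
    simp only [coe_filter, Set.mem_ofPred_eq, mem_gapSets, Multiset.mem_toFinset]
    refine ⟨⟨fun a ha ↦ ⟨p.parts_pos ha, (p.le_of_mem_parts ha).trans hN⟩,
      fun a ha h ↦ hgap _ h _ ha rfl⟩, ?_⟩
    rw [Finset.sum, Multiset.toFinset_val, hnodup.dedup, Multiset.map_id', p.parts_sum]
  · rintro p p' ⟨h, -⟩ ⟨h', -⟩ hp
    rw [← Finset.val_inj, Multiset.toFinset_val, Multiset.toFinset_val, h.dedup, h'.dedup] at hp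
    exact Nat.Partition.ext hp
  · intro s hs
    simp only [coe_filter, Set.mem_ofPred_eq, mem_gapSets] at hs
    obtain ⟨⟨hle, hgap⟩, hsum⟩ := hs
    refine ⟨⟨s.val, fun {a} ha ↦ (hle a ha).1, ?_⟩, ⟨s.nodup, fun a ha b hb h ↦ ?_⟩, ?_⟩
    · rw [← hsum, Finset.sum, Multiset.map_id']
    · exact hgap b hb (h ▸ ha)
    · exact val_toFinset s

end GapSets

section PowerSeries

open Filter PowerSeries PowerSeries.WithPiTopology Topology

theorem prod_range_ite_mod_five (q : R) (N : ℕ) :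
    ∏ i ∈ range (5 * N), (if (i + 1) % 5 = 1 ∨ (i + 1) % 5 = 4 then 1 - q ^ (i + 1) else 1) =
      qPochhammer q (q ^ 5) N * qPochhammer (q ^ 4) (q ^ 5) N := by
  have hmod (i r : ℕ) : (5 * i + r + 1) % 5 = (r + 1) % 5 := by omega
  have hpow (i r : ℕ) : q ^ (5 * i + r + 1) = q ^ (r + 1) * (q ^ 5) ^ i := by ring
  simp [prod_range_mul, hmod, hpow, prod_range_succ, qPochhammer]

variable (R)

theorem X_pow_dvd_sum_gapSets_mul_sub_one {m N : ℕ} (hN : 7 * m ≤ N) :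
    (X : R⟦X⟧) ^ m ∣ (∑ s ∈ gapSets N, X ^ (∑ a ∈ s, a)) *
      (qPochhammer X (X ^ 5) N * qPochhammer (X ^ 4) (X ^ 5) N) - 1 := by
  have hX : Ideal.Quotient.mk (Ideal.span {(X : R⟦X⟧) ^ m}) X ^ m = 0 := by
    rw [← map_pow, Ideal.Quotient.eq_zero_iff_mem]
    exact Ideal.mem_span_singleton_self _
  rw [← Ideal.mem_span_singleton, ← Ideal.Quotient.eq]
  simp only [map_mul, map_sum, map_pow, map_qPochhammer, map_one]
  rw [sum_gapSets_pow_sum]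
  exact schurSum_mul_qPochhammer_mul_qPochhammer hX (by omega) (by omega)

variable [TopologicalSpace R]

variable {R} in
theorem tendsto_of_eventually_X_pow_dvd_sub {ι : Type*} {f : ι → R⟦X⟧} {l : Filter ι} {g : R⟦X⟧}
    (h : ∀ m : ℕ, ∀ᶠ i in l, X ^ m ∣ f i - g) : Tendsto f l (𝓝 g) := by
  refine (tendsto_iff_coeff_tendsto R f l g).2 fun d ↦ tendsto_nhds_of_eventually_eq ?_
  filter_upwards [h (d + 1)] with i hi
  rw [← sub_eq_zero, ← map_sub, X_pow_dvd_iff.1 hi d d.lt_succ_self]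

theorem multipliable_ite_one_sub_X_pow (p : ℕ → Prop) [DecidablePred p] :
    Multipliable fun i ↦ if p (i + 1) then 1 - (X : R⟦X⟧) ^ (i + 1) else 1 := by
  nontriviality R using Subsingleton.eq_one (α := R⟦X⟧)
  have h (i : ℕ) : (if p (i + 1) then 1 - (X : R⟦X⟧) ^ (i + 1) else 1) =
      1 + if p (i + 1) then -X ^ (i + 1) else 0 := by
    split_ifs <;> ring
  simp_rw [h]
  refine multipliable_one_add_of_tendsto_order_atTop_nhds_top R
    (ENat.tendsto_nhds_top_iff_natCast_lt.2 fun n ↦ eventually_atTop.2 ⟨n, fun i hi ↦ ?_⟩)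
  split_ifs
  · rw [order_neg, order_X_pow]
    exact_mod_cast hi.trans_lt i.lt_succ_self
  · simp

theorem mk_card_restricted_mul_tprod [IsTopologicalRing R] [T2Space R]
    (p : ℕ → Prop) [DecidablePred p] :
    (PowerSeries.mk fun n ↦ ((Nat.Partition.restricted n p).card : R)) *
      ∏' i, (if p (i + 1) then 1 - X ^ (i + 1) else 1) = 1 := by
  rw [Nat.Partition.powerSeriesMk_card_restricted_eq_tprod R p,
    ← (Nat.Partition.multipliable_powerSeriesMk_card_restricted R p).tprod_mul
      (multipliable_ite_one_sub_X_pow R p)]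
  refine (tprod_congr fun i ↦ ?_).trans tprod_one
  split_ifs
  · simp_rw [pow_mul]
    exact tsum_pow_mul_one_sub_of_constantCoeff_eq_zero (by simp)
  · rw [one_mul]

theorem tendsto_sum_gapSets_X_pow :
    Tendsto (fun N ↦ ∑ s ∈ gapSets N, (X : R⟦X⟧) ^ (∑ a ∈ s, a)) atTop
      (𝓝 (PowerSeries.mk fun n ↦ (Set.ncard {p : n.Partition |
        p.parts.Nodup ∧ ∀ a ∈ p.parts, ∀ b ∈ p.parts, a ≠ b + 1} : R))) := by
  refine (tendsto_iff_coeff_tendsto R _ _ _).2 fun n ↦ tendsto_nhds_of_eventually_eq ?_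
  filter_upwards [eventually_ge_atTop n] with N hN
  simp [coeff_X_pow, sum_boole, eq_comm (a := n), card_filter_gapSets_sum_eq hN]

theorem mk_ncard_gap_mul_tprod [IsTopologicalRing R] [T2Space R] :
    (PowerSeries.mk fun n ↦ (Set.ncard {p : n.Partition |
        p.parts.Nodup ∧ ∀ a ∈ p.parts, ∀ b ∈ p.parts, a ≠ b + 1} : R)) *
      ∏' i, (if (i + 1) % 5 = 1 ∨ (i + 1) % 5 = 4 then 1 - X ^ (i + 1) else 1) = 1 := by
  have hprod := (multipliable_ite_one_sub_X_pow R fun a ↦ a % 5 = 1 ∨ a % 5 = 4)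
    |>.hasProd.tendsto_prod_nat.comp (tendsto_id.const_mul_atTop' (show 0 < 5 by norm_num))
  simp only [comp_def, id, prod_range_ite_mod_five] at hprod
  refine tendsto_nhds_unique ((tendsto_sum_gapSets_X_pow R).mul hprod)
    (tendsto_of_eventually_X_pow_dvd_sub fun m ↦ ?_)
  filter_upwards [eventually_ge_atTop (7 * m)] with N hN
  exact X_pow_dvd_sum_gapSets_mul_sub_one R hN

end PowerSeries

/-- The first Rogers–Ramanujan identity: the number of partitions of `n` into
distinct parts no two of which are consecutive equals the number of partitions
of `n` into parts congruent to `1` or `4` modulo `5`. -/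
theorem rogers_ramanujan_first (n : ℕ) :
    Set.ncard {p : n.Partition |
        p.parts.Nodup ∧ ∀ a ∈ p.parts, ∀ b ∈ p.parts, a ≠ b + 1}
      = Set.ncard {p : n.Partition | ∀ a ∈ p.parts, a % 5 = 1 ∨ a % 5 = 4} := by
  have hseries := left_inv_eq_right_inv (mk_ncard_gap_mul_tprod ℤ)
    ((mul_comm _ _).trans (mk_card_restricted_mul_tprod ℤ fun a ↦ a % 5 = 1 ∨ a % 5 = 4))
  have hcoeff := congrArg (PowerSeries.coeff n) hseries
  rw [PowerSeries.coeff_mk, PowerSeries.coeff_mk, Nat.cast_inj] at hcoeff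
  rw [hcoeff, ← Set.ncard_coe_finset]
  simp [Nat.Partition.restricted]
end

section
/- With parameters d ≥ 1, k ≥ 1, 0 ≤ a ≤ k, 1 ≤ e ≤ d: \overline{U}_{dk+e,da+d}(x) − \overline{U}_{dk+e,d(a−1)+d}(x) = (xq)^{da} U_{dk+e,d(k−a)+e}(xq) + (xq)^{da+d} U_{dk+e,d(k−a−1)+e}(xq). -/
/-- An overpartition recorded by a pair of multiplicity functions:
`p.1 i` is the number of non-overlined occurrences of the part `i` and
`p.2 i ∈ {0, 1}` is the number of overlined occurrences of `i`.
There are no parts equal to `0`. -/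
def IsOverPtn (p : (ℕ →₀ ℕ) × (ℕ →₀ ℕ)) : Prop :=
  p.1 0 = 0 ∧ p.2 0 = 0 ∧ ∀ i, p.2 i ≤ 1

/-- The number of parts of an overpartition. -/
def opParts (p : (ℕ →₀ ℕ) × (ℕ →₀ ℕ)) : ℕ :=
  (p.1.sum fun _ v => v) + (p.2.sum fun _ v => v)

/-- The weight (number partitioned) of an overpartition. -/
def opWt (p : (ℕ →₀ ℕ) × (ℕ →₀ ℕ)) : ℕ :=
  (p.1.sum fun i v => i * v) + (p.2.sum fun i v => i * v)

/-- Conditions (i)-(iv) of Definition 1.6 (Kursungoz–Zadehdabbagh), with modulus `d`,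
first index `N = dk + e` and second index `M = da + f`: writing `f_i = p.1 i`,
`f_{ī} = p.2 i`,
(i) `f_1 ≤ M - 1 + (d-1) f_{1̄}`;
(ii) `f_{2l-1} ≥ (d-1) f_{\overline{2l-1}}`;
(iii) `f_{2l} + f_{\overline{2l}} ≡ 0 (mod d)`;
(iv) `f_l + f_{l̄} + f_{l+1} ≤ N - 1 + (d-1) f_{\overline{l+1}}` for all `l ≥ 1`. -/
def uCond (d N M : ℕ) (p : (ℕ →₀ ℕ) × (ℕ →₀ ℕ)) : Prop :=
  p.1 1 + 1 ≤ M + (d - 1) * p.2 1 ∧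
  (∀ l : ℕ, (d - 1) * p.2 (2 * l + 1) ≤ p.1 (2 * l + 1)) ∧
  (∀ l : ℕ, d ∣ p.1 (2 * l + 2) + p.2 (2 * l + 2)) ∧
  (∀ l : ℕ, 1 ≤ l → p.1 l + p.2 l + p.1 (l + 1) + 1 ≤ N + (d - 1) * p.2 (l + 1))

/-- Conditions (ī)-(iv̄): as `uCond` with the parity roles of odd and even parts
swapped in the second and third conditions. -/
def ubarCond (d N M : ℕ) (p : (ℕ →₀ ℕ) × (ℕ →₀ ℕ)) : Prop :=
  p.1 1 + 1 ≤ M + (d - 1) * p.2 1 ∧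
  (∀ l : ℕ, (d - 1) * p.2 (2 * l + 2) ≤ p.1 (2 * l + 2)) ∧
  (∀ l : ℕ, d ∣ p.1 (2 * l + 1) + p.2 (2 * l + 1)) ∧
  (∀ l : ℕ, 1 ≤ l → p.1 l + p.2 l + p.1 (l + 1) + 1 ≤ N + (d - 1) * p.2 (l + 1))

/-- `u_{N, M}(m, n)`: the number of overpartitions of `n` into `m` parts
satisfying conditions (i)-(iv). -/
noncomputable def uCount (d N M m n : ℕ) : ℕ :=
  Set.ncard {p : (ℕ →₀ ℕ) × (ℕ →₀ ℕ) |
    IsOverPtn p ∧ opParts p = m ∧ opWt p = n ∧ uCond d N M p}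

/-- `ū_{N, M}(m, n)`: the number of overpartitions of `n` into `m` parts
satisfying conditions (ī)-(iv̄). -/
noncomputable def ubarCount (d N M m n : ℕ) : ℕ :=
  Set.ncard {p : (ℕ →₀ ℕ) × (ℕ →₀ ℕ) |
    IsOverPtn p ∧ opParts p = m ∧ opWt p = n ∧ ubarCond d N M p}

/-- The two-variable generating function `U_{N,M}(x) = Σ u_{N,M}(m,n) x^m q^n`. -/
noncomputable def Ugf (d N M : ℕ) (x q : ℂ) : ℂ :=
  ∑' mn : ℕ × ℕ, (uCount d N M mn.1 mn.2 : ℂ) * x ^ mn.1 * q ^ mn.2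

/-- The two-variable generating function `Ū_{N,M}(x) = Σ ū_{N,M}(m,n) x^m q^n`. -/
noncomputable def UbarGf (d N M : ℕ) (x q : ℂ) : ℂ :=
  ∑' mn : ℕ × ℕ, (ubarCount d N M mn.1 mn.2 : ℂ) * x ^ mn.1 * q ^ mn.2

/-- The infinite q-Pochhammer symbol `(a; q)_∞ = ∏_{j ≥ 0} (1 - a q^j)`. -/
noncomputable def qPochInf (a q : ℂ) : ℂ := ∏' j : ℕ, (1 - a * q ^ j)

/-- The finite q-Pochhammer symbol `(a; q)_n = ∏_{j=0}^{n-1} (1 - a q^j)`. -/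
noncomputable def qPochFin (a q : ℂ) (n : ℕ) : ℂ := ∏ j ∈ Finset.range n, (1 - a * q ^ j)

/-! Prepending `j` parts `1` and `b` parts `1̄`, after raising every part by one, exchanges the two
parity conditions and turns the condition on adjacent multiplicities at `1, 2` into the initial
condition on `1`; so it carries the overpartitions counted by `u_{N, N - (j + b)}` bijectively onto
those counted by `ū_{N, M}` with `f_1 = j` and `f_{1̄} = b`, and `x` becomes `x q`. In passing from
`ū_{N, da}` to `ū_{N, da + d}` the initial condition together with `d ∣ f_1 + f_{1̄}` leaves exactly
two new possibilities for `(f_1, f_{1̄})`, namely `(da, 0)` and `(da + d - 1, 1)`. The multiplicities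
are bounded, so all the series converge for every `x` as soon as `‖q‖ < 1`. -/

/-! ### Sums over fibers and subsets -/

theorem tsum_ncard_fiber_mul {α β R : Type*} [Ring R] [UniformSpace R] [IsUniformAddGroup R]
    [CompleteSpace R] [T2Space R] {S : Set α} (g : α → β) (F : β → R)
    (h : Summable fun p : S => F (g p)) :
    ∑' b, ({p ∈ S | g p = b}.ncard : R) * F b = ∑' p : S, F (g p) := by
  rw [← (h.hasSum.tsum_fiberwise fun p => g p).tsum_eq]
  refine tsum_congr fun b => ?_
  have hconst (p : (fun p : S => g p) ⁻¹' {b}) : F (g p.1) = F b := congrArg F p.2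
  have hfiber : {p ∈ S | g p = b} = Subtype.val '' ((fun p : S => g p) ⁻¹' {b}) := by
    ext p
    simp [and_comm]
  rw [tsum_congr hconst, tsum_const, nsmul_eq_mul, Nat.card_coe_set_eq, hfiber,
    Set.ncard_image_of_injective _ Subtype.val_injective]

section SubsetSums

variable {α R : Type*} [AddCommGroup R] [UniformSpace R] [IsUniformAddGroup R] [CompleteSpace R]
  {f : α → R} {S T : Set α}

theorem summable_subtype_of_subset (hTS : T ⊆ S) (hf : Summable fun p : S => f p) :
    Summable fun p : T => f p :=
  hf.comp_injective (Set.inclusion_injective hTS)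

theorem tsum_sub_tsum_eq_tsum_sdiff [T2Space R] (hTS : T ⊆ S) (hf : Summable fun p : S => f p) :
    ∑' p : S, f p - ∑' p : T, f p = ∑' p : ↥(S \ T), f p := by
  have hunion := Summable.tsum_union_disjoint disjoint_sdiff_self_right
    (summable_subtype_of_subset hTS hf) (summable_subtype_of_subset Set.sdiff_subset hf)
  rw [Set.union_sdiff_cancel hTS] at hunion
  rw [hunion, add_sub_cancel_left]

end SubsetSums

/-! ### Summability over finitely supported functions with bounded values -/

section BoundedFinsupp

variable {ι : Type*} {B : ℕ}

/-- The cells of the diagram of `f`, with rows indexed by `ι`; only the first `B` columns are kept,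
which loses nothing when `f ≤ B`. It encodes such `f` as finite subsets of one index set, so that a
sum over them is part of the expansion of an infinite product `∏ (1 + y)`. -/
def diagramCells (B : ℕ) (f : ι →₀ ℕ) : Finset (Σ _ : ι, Fin B) :=
  f.support.sigma fun i => {c : Fin B | (c : ℕ) < f i}

theorem mem_diagramCells {f : ι →₀ ℕ} {i : ι} {c : Fin B} :
    ⟨i, c⟩ ∈ diagramCells B f ↔ (c : ℕ) < f i := by
  simp only [diagramCells, Finset.mem_sigma, Finsupp.mem_support_iff, Finset.mem_filter_univ]
  omega

theorem prod_diagramCells {R : Type*} [CommMonoid R] (y : ι → R) {f : ι →₀ ℕ}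
    (hf : ∀ i, f i ≤ B) :
    ∏ c ∈ diagramCells B f, y c.1 = f.prod fun i v => y i ^ v := by
  simp only [diagramCells, Finset.prod_sigma, Finset.prod_const, Fin.card_filter_val_lt,
    min_eq_right (hf _), Finsupp.prod]

theorem diagramCells_injOn : Set.InjOn (diagramCells B) {f : ι →₀ ℕ | ∀ i, f i ≤ B} := by
  intro f hf g hg hfg
  ext i
  refine eq_of_forall_lt_iff fun c => ?_
  by_cases hc : c < B
  · simpa only [mem_diagramCells] using Finset.ext_iff.1 hfg ⟨i, ⟨c, hc⟩⟩
  · have hfi := hf i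
    have hgi := hg i
    omega

theorem summable_finsuppProd_pow_of_le {y : ι → ℝ} (hy0 : ∀ i, 0 ≤ y i) (hy : Summable y)
    (B : ℕ) : Summable fun f : {f : ι →₀ ℕ | ∀ i, f i ≤ B} => f.1.prod fun i v => y i ^ v := by
  have hcells : Summable fun c : Σ _ : ι, Fin B => y c.1 := by
    refine (summable_sigma_of_nonneg fun c => hy0 c.1).2
      ⟨fun _ => (hasSum_fintype _).summable, ?_⟩
    simpa only [tsum_fintype, Finset.sum_const] using hy.const_smul _
  refine ((summable_finsetProd_of_summable_nonneg (fun c => hy0 c.1) hcells).comp_injective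
    diagramCells_injOn.injective).congr fun f => ?_
  exact prod_diagramCells y f.2

end BoundedFinsupp

/-! ### Generating functions as sums over overpartitions -/

/-- The contribution `x ^ m * q ^ n` of an overpartition of `n` into `m` parts to a generating
function. -/
def opTerm (x q : ℂ) (p : (ℕ →₀ ℕ) × (ℕ →₀ ℕ)) : ℂ := x ^ opParts p * q ^ opWt p

theorem pow_sum_mul_pow_sum_eq_prod {R : Type*} [CommMonoid R] (x q : R) (f : ℕ →₀ ℕ) :
    x ^ (f.sum fun _ v => v) * q ^ (f.sum fun i v => i * v)
      = f.prod fun i v => (x * q ^ i) ^ v := by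
  simp only [Finsupp.sum, Finsupp.prod, ← Finset.prod_pow_eq_pow_sum, ← Finset.prod_mul_distrib,
    mul_pow, pow_mul]

theorem opTerm_eq_prod_mul_prod (x q : ℂ) (p : (ℕ →₀ ℕ) × (ℕ →₀ ℕ)) :
    opTerm x q p
      = (p.1.prod fun i v => (x * q ^ i) ^ v) * p.2.prod fun i v => (x * q ^ i) ^ v := by
  rw [← pow_sum_mul_pow_sum_eq_prod, ← pow_sum_mul_pow_sum_eq_prod, opTerm, opParts, opWt]
  ring

theorem norm_finsuppProd_mul_pow (x q : ℂ) (f : ℕ →₀ ℕ) :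
    ‖f.prod fun i v => (x * q ^ i) ^ v‖ = f.prod fun i v => (‖x‖ * ‖q‖ ^ i) ^ v := by
  simp only [Finsupp.prod, norm_prod, norm_pow, norm_mul]

theorem summable_opTerm_of_le (x : ℂ) {q : ℂ} (hq : ‖q‖ < 1) {A B : ℕ}
    {S : Set ((ℕ →₀ ℕ) × (ℕ →₀ ℕ))} (hA : ∀ p ∈ S, ∀ i, p.1 i ≤ A)
    (hB : ∀ p ∈ S, ∀ i, p.2 i ≤ B) : Summable fun p : S => opTerm x q p := by
  have hbounded (C : ℕ) : Summable fun f : {f : ℕ →₀ ℕ | ∀ i, f i ≤ C} =>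
      ‖f.1.prod fun i v => (x * q ^ i) ^ v‖ := by
    simp only [norm_finsuppProd_mul_pow]
    exact summable_finsuppProd_pow_of_le (fun i => by positivity)
      ((summable_geometric_of_lt_one (norm_nonneg q) hq).mul_left ‖x‖) C
  let pair (p : S) : {f : ℕ →₀ ℕ | ∀ i, f i ≤ A} × {f : ℕ →₀ ℕ | ∀ i, f i ≤ B} :=
    (⟨p.1.1, hA p p.2⟩, ⟨p.1.2, hB p p.2⟩)
  have hpair : Function.Injective pair := fun p p' h =>
    Subtype.ext (Prod.ext (congrArg (·.1.1) h) (congrArg (·.2.1) h))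
  refine ((summable_mul_of_summable_norm (hbounded A) (hbounded B)).comp_injective hpair).congr
    fun p => ?_
  exact (opTerm_eq_prod_mul_prod x q p).symm

/-- The overpartitions counted by `u_{N, M}`. -/
def uOverPtn (d N M : ℕ) : Set ((ℕ →₀ ℕ) × (ℕ →₀ ℕ)) := {p | IsOverPtn p ∧ uCond d N M p}

/-- The overpartitions counted by `ū_{N, M}`. -/
def ubarOverPtn (d N M : ℕ) : Set ((ℕ →₀ ℕ) × (ℕ →₀ ℕ)) := {p | IsOverPtn p ∧ ubarCond d N M p}

section GeneratingFunctions

variable {d N : ℕ} {p : (ℕ →₀ ℕ) × (ℕ →₀ ℕ)}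

theorem IsOverPtn.fst_le_of_adjacent_le (hp : IsOverPtn p)
    (h : ∀ l, 1 ≤ l → p.1 l + p.2 l + p.1 (l + 1) + 1 ≤ N + (d - 1) * p.2 (l + 1)) (i : ℕ) :
    p.1 i ≤ N + (d - 1) := by
  rcases i.eq_zero_or_pos with rfl | hi
  · simp only [hp.1, zero_le]
  · have hover : (d - 1) * p.2 (i + 1) ≤ d - 1 := mul_le_of_le_one_right' (hp.2.2 _)
    have hadjacent := h i hi
    omega

variable (d N) (M : ℕ) (x : ℂ) {q : ℂ} (hq : ‖q‖ < 1)
include hq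

theorem summable_opTerm_uOverPtn : Summable fun p : uOverPtn d N M => opTerm x q p :=
  summable_opTerm_of_le x hq (fun _ hp => hp.1.fst_le_of_adjacent_le hp.2.2.2.2)
    fun _ hp => hp.1.2.2

theorem summable_opTerm_ubarOverPtn : Summable fun p : ubarOverPtn d N M => opTerm x q p :=
  summable_opTerm_of_le x hq (fun _ hp => hp.1.fst_le_of_adjacent_le hp.2.2.2.2)
    fun _ hp => hp.1.2.2

theorem Ugf_eq_tsum_opTerm : Ugf d N M x q = ∑' p : uOverPtn d N M, opTerm x q p := by
  refine Eq.trans (tsum_congr fun mn => ?_) (tsum_ncard_fiber_mul (fun p => (opParts p, opWt p))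
    (fun mn => x ^ mn.1 * q ^ mn.2) (summable_opTerm_uOverPtn d N M x hq))
  rw [mul_assoc, uCount]
  congr 3
  ext p
  simp only [uOverPtn, Set.mem_ofPred_eq, Prod.ext_iff]
  tauto

theorem UbarGf_eq_tsum_opTerm : UbarGf d N M x q = ∑' p : ubarOverPtn d N M, opTerm x q p := by
  refine Eq.trans (tsum_congr fun mn => ?_) (tsum_ncard_fiber_mul (fun p => (opParts p, opWt p))
    (fun mn => x ^ mn.1 * q ^ mn.2) (summable_opTerm_ubarOverPtn d N M x hq))
  rw [mul_assoc, ubarCount]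
  congr 3
  ext p
  simp only [ubarOverPtn, Set.mem_ofPred_eq, Prod.ext_iff]
  tauto

end GeneratingFunctions

/-! ### Prepending ones -/

/-- Raise every part recorded by the multiplicity function `f` by one, then add `j` parts `1`. -/
noncomputable def prependOnes (j : ℕ) (f : ℕ →₀ ℕ) : ℕ →₀ ℕ :=
  f.mapDomain (· + 1) + Finsupp.single 1 j

section PrependOnes

variable (j : ℕ) (f : ℕ →₀ ℕ)

theorem prependOnes_zero : prependOnes j f 0 = 0 := by
  simp [prependOnes, Finsupp.mapDomain_of_notMem_range]

theorem prependOnes_one : prependOnes j f 1 = f 0 + j := by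
  simpa [prependOnes] using Finsupp.mapDomain_apply (add_left_injective 1) f 0

theorem prependOnes_add_two (n : ℕ) : prependOnes j f (n + 2) = f (n + 1) := by
  simpa [prependOnes] using Finsupp.mapDomain_apply (add_left_injective 1) f (n + 1)

theorem prependOnes_injective : Function.Injective (prependOnes j) :=
  (add_left_injective _).comp (Finsupp.mapDomain_injective (add_left_injective 1))

theorem exists_prependOnes_eq {f : ℕ →₀ ℕ} (hf : f 0 = 0) :
    ∃ g : ℕ →₀ ℕ, g 0 = 0 ∧ prependOnes (f 1) g = f := by
  obtain ⟨g, hg⟩ : f.erase 1 ∈ Set.range (Finsupp.mapDomain (· + 1)) := by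
    refine (Finsupp.mem_range_mapDomain_iff _ (add_left_injective 1) _).2 ?_
    rintro (_ | n) hn
    · rwa [Finsupp.erase_ne zero_ne_one]
    · exact absurd ⟨n, rfl⟩ hn
  refine ⟨g, ?_, by rw [prependOnes, hg, Finsupp.erase_add_single]⟩
  rw [← Finsupp.mapDomain_apply (add_left_injective 1) g 0, hg, Finsupp.erase_same]

theorem prod_prependOnes {R : Type*} [CommMonoid R] (x q : R) :
    ((prependOnes j f).prod fun i v => (x * q ^ i) ^ v)
      = (x * q) ^ j * f.prod fun i v => (x * q * q ^ i) ^ v := by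
  rw [prependOnes, Finsupp.prod_add_index' (fun _ => pow_zero _) (fun _ => pow_add _),
    Finsupp.prod_mapDomain_index (fun _ => pow_zero _) (fun _ => pow_add _),
    Finsupp.prod_single_index (h := fun i v => (x * q ^ i) ^ v) (pow_zero _), mul_comm]
  simp only [pow_zero, mul_one, pow_succ', mul_assoc]

end PrependOnes

/-- Raise every part of an overpartition by one, then add `j` non-overlined and `b` overlined
parts `1`. -/
noncomputable def opPrependOnes (j b : ℕ) (p : (ℕ →₀ ℕ) × (ℕ →₀ ℕ)) : (ℕ →₀ ℕ) × (ℕ →₀ ℕ) :=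
  (prependOnes j p.1, prependOnes b p.2)

section OpPrependOnes

variable {d N M j b : ℕ} {p : (ℕ →₀ ℕ) × (ℕ →₀ ℕ)}

theorem opPrependOnes_injective (j b : ℕ) : Function.Injective (opPrependOnes j b) :=
  (prependOnes_injective j).prodMap (prependOnes_injective b)

theorem opTerm_opPrependOnes (x q : ℂ) (j b : ℕ) (p : (ℕ →₀ ℕ) × (ℕ →₀ ℕ)) :
    opTerm x q (opPrependOnes j b p) = (x * q) ^ (j + b) * opTerm (x * q) q p := by
  simp only [opTerm_eq_prod_mul_prod, opPrependOnes, prod_prependOnes]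
  ring

theorem isOverPtn_opPrependOnes (hp : IsOverPtn p) (hb : b ≤ 1) :
    IsOverPtn (opPrependOnes j b p) := by
  refine ⟨prependOnes_zero _ _, prependOnes_zero _ _, ?_⟩
  rintro (_ | _ | i)
  · exact (prependOnes_zero _ _).trans_le zero_le_one
  · exact (prependOnes_one _ _).trans_le (by rwa [hp.2.1, zero_add])
  · exact (prependOnes_add_two _ _ _).trans_le (hp.2.2 _)

theorem exists_opPrependOnes_eq (hp : IsOverPtn p) :
    ∃ p', IsOverPtn p' ∧ opPrependOnes (p.1 1) (p.2 1) p' = p := by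
  obtain ⟨f, hf0, hf⟩ := exists_prependOnes_eq hp.1
  obtain ⟨g, hg0, hg⟩ := exists_prependOnes_eq hp.2.1
  refine ⟨(f, g), ⟨hf0, hg0, ?_⟩, Prod.ext hf hg⟩
  rintro (_ | i)
  · exact hg0.trans_le zero_le_one
  · rw [← prependOnes_add_two (p.2 1) g i, hg]
    exact hp.2.2 _

theorem ubarCond_opPrependOnes_iff (hp : IsOverPtn p) :
    ubarCond d N M (opPrependOnes j b p) ↔
      j + 1 ≤ M + (d - 1) * b ∧ d ∣ j + b ∧ uCond d N (N - (j + b)) p := by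
  have hodd : (∀ l, d ∣ prependOnes j p.1 (2 * l + 1) + prependOnes b p.2 (2 * l + 1)) ↔
      d ∣ j + b ∧ ∀ l, d ∣ p.1 (2 * l + 2) + p.2 (2 * l + 2) := by
    rw [← Nat.and_forall_add_one]
    simp only [mul_zero, zero_add, prependOnes_one, hp.1, hp.2.1, mul_add_one, add_right_comm _ 2 1,
      prependOnes_add_two]
  have hadjacent : (∀ l, 1 ≤ l → prependOnes j p.1 l + prependOnes b p.2 l +
        prependOnes j p.1 (l + 1) + 1 ≤ N + (d - 1) * prependOnes b p.2 (l + 1)) ↔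
      j + b + p.1 1 + 1 ≤ N + (d - 1) * p.2 1 ∧
        ∀ l, 1 ≤ l → p.1 l + p.2 l + p.1 (l + 1) + 1 ≤ N + (d - 1) * p.2 (l + 1) := by
    rw [← Nat.and_forall_add_one, ← Nat.and_forall_add_one, ← Nat.and_forall_add_one (p := fun l =>
      1 ≤ l → p.1 l + p.2 l + p.1 (l + 1) + 1 ≤ N + (d - 1) * p.2 (l + 1))]
    simp [prependOnes_one, prependOnes_add_two, hp.1, hp.2.1]
  -- If `N < j + b`, both sides fail, so truncated subtraction is harmless.
  have hfirst (h : (d - 1) * p.2 1 ≤ p.1 1) : j + b + p.1 1 + 1 ≤ N + (d - 1) * p.2 1 ↔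
      p.1 1 + 1 ≤ N - (j + b) + (d - 1) * p.2 1 := by
    omega
  simp only [ubarCond, uCond, opPrependOnes, prependOnes_one, prependOnes_add_two, hodd, hadjacent,
    hp.1, hp.2.1, zero_add]
  constructor
  · rintro ⟨hM, heven, ⟨hd, hodd⟩, hadj, hrest⟩
    exact ⟨hM, hd, (hfirst (heven 0)).1 hadj, heven, hodd, hrest⟩
  · rintro ⟨hM, hd, hadj, heven, hodd, hrest⟩
    exact ⟨hM, heven, ⟨hd, hodd⟩, (hfirst (heven 0)).2 hadj, hrest⟩

theorem image_opPrependOnes_uOverPtn (hb : b ≤ 1) (hM : j + 1 ≤ M + (d - 1) * b)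
    (hdvd : d ∣ j + b) :
    opPrependOnes j b '' uOverPtn d N (N - (j + b))
      = {p ∈ ubarOverPtn d N M | p.1 1 = j ∧ p.2 1 = b} := by
  ext p
  constructor
  · rintro ⟨p, ⟨hp, hu⟩, rfl⟩
    refine ⟨⟨isOverPtn_opPrependOnes hp hb, (ubarCond_opPrependOnes_iff hp).2 ⟨hM, hdvd, hu⟩⟩, ?_⟩
    simp only [opPrependOnes, prependOnes_one, hp.1, hp.2.1, zero_add, and_self]
  · rintro ⟨⟨hp, hubar⟩, rfl, rfl⟩
    obtain ⟨p', hp', hpp'⟩ := exists_opPrependOnes_eq hp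
    rw [← hpp', ubarCond_opPrependOnes_iff hp'] at hubar
    exact ⟨p', ⟨hp', hubar.2.2⟩, hpp'⟩

theorem tsum_ubarOverPtn_first_eq (x : ℂ) {q : ℂ} (hq : ‖q‖ < 1) (hb : b ≤ 1)
    (hM : j + 1 ≤ M + (d - 1) * b) (hdvd : d ∣ j + b) :
    ∑' p : {p ∈ ubarOverPtn d N M | p.1 1 = j ∧ p.2 1 = b}, opTerm x q p
      = (x * q) ^ (j + b) * Ugf d N (N - (j + b)) (x * q) q := by
  rw [← image_opPrependOnes_uOverPtn hb hM hdvd,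
    tsum_image (opTerm x q) (opPrependOnes_injective j b).injOn, Ugf_eq_tsum_opTerm _ _ _ _ hq,
    ← tsum_mul_left]
  simp only [opTerm_opPrependOnes]

end OpPrependOnes

/-! ### The functional equation -/

section FunctionalEquation

variable {d : ℕ} (N a : ℕ)

theorem ubarOverPtn_mono {M M' : ℕ} (h : M ≤ M') : ubarOverPtn d N M ⊆ ubarOverPtn d N M' :=
  fun _ hp => ⟨hp.1, hp.2.1.trans (Nat.add_le_add_right h _), hp.2.2⟩

theorem add_eq_mul_of_mem_ubarOverPtn_sdiff (hd : 1 ≤ d) {p : (ℕ →₀ ℕ) × (ℕ →₀ ℕ)}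
    (hp : p ∈ ubarOverPtn d N (d * a + d) \ ubarOverPtn d N (d * a)) :
    p.1 1 + p.2 1 = d * (a + p.2 1) := by
  obtain ⟨⟨hover, hlt, hrest⟩, hnot⟩ := hp
  have hge : d * a + (d - 1) * p.2 1 < p.1 1 + 1 := not_le.1 fun h => hnot ⟨hover, h, hrest⟩
  have hdvd : d ∣ p.1 1 + p.2 1 := hrest.2.1 0
  have hsplit : (d - 1) * p.2 1 + p.2 1 = d * p.2 1 := by
    rw [← add_one_mul, Nat.sub_add_cancel hd]
  refine Nat.eq_mul_of_div_eq_right hdvd (Nat.div_eq_of_lt_le ?_ ?_) <;> linarith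

theorem ubarOverPtn_sdiff (hd : 1 ≤ d) :
    ubarOverPtn d N (d * a + d) \ ubarOverPtn d N (d * a)
      = {p ∈ ubarOverPtn d N (d * a + d) | p.1 1 = d * a ∧ p.2 1 = 0} ∪
        {p ∈ ubarOverPtn d N (d * a + d) | p.1 1 = d * a + (d - 1) ∧ p.2 1 = 1} := by
  ext p
  constructor
  · intro hp
    have hsum := add_eq_mul_of_mem_ubarOverPtn_sdiff N a hd hp
    rcases Nat.le_one_iff_eq_zero_or_eq_one.1 (hp.1.1.2.2 1) with hb | hb <;> rw [hb] at hsum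
    · exact Or.inl ⟨hp.1, hsum, hb⟩
    · exact Or.inr ⟨hp.1, by rw [mul_add_one] at hsum; omega, hb⟩
  · rintro (⟨hp, hj, hb⟩ | ⟨hp, hj, hb⟩) <;>
    · refine ⟨hp, fun hp' => ?_⟩
      have hle := hp'.2.1
      rw [hj, hb] at hle
      omega

end FunctionalEquation

theorem Ubar_functional_equation_general (d N a : ℕ) (hd : 1 ≤ d) (x q : ℂ) (hq : ‖q‖ < 1) :
    UbarGf d N (d * a + d) x q - UbarGf d N (d * a) x q
      = (x * q) ^ (d * a) * Ugf d N (N - d * a) (x * q) q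
        + (x * q) ^ (d * a + d) * Ugf d N (N - (d * a + d)) (x * q) q := by
  have hsum := summable_opTerm_ubarOverPtn d N (d * a + d) x hq
  have hones : d * a + (d - 1) + 1 = d * a + d := by omega
  have hplain := tsum_ubarOverPtn_first_eq (N := N) (M := d * a + d) (j := d * a) x hq
    zero_le_one (by omega) (dvd_mul_right d a)
  have hoverlined := tsum_ubarOverPtn_first_eq (N := N) (M := d * a + d) (j := d * a + (d - 1))
    x hq le_rfl (by omega) ⟨a + 1, by rw [hones, mul_add_one]⟩
  rw [add_zero] at hplain
  rw [hones] at hoverlined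
  rw [← hplain, ← hoverlined, UbarGf_eq_tsum_opTerm _ _ _ _ hq, UbarGf_eq_tsum_opTerm _ _ _ _ hq,
    tsum_sub_tsum_eq_tsum_sdiff (ubarOverPtn_mono N (Nat.le_add_right _ _)) hsum,
    ubarOverPtn_sdiff N a hd]
  refine Summable.tsum_union_disjoint (Set.disjoint_left.2 fun p hp hp' => ?_)
    (summable_subtype_of_subset (Set.sep_subset _ _) hsum)
    (summable_subtype_of_subset (Set.sep_subset _ _) hsum)
  exact zero_ne_one (hp.2.2.symm.trans hp'.2.2)

/-- Lemma 2.2, second functional equation: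
`Ū_{dk+e, da+d}(x) − Ū_{dk+e, d(a-1)+d}(x)
  = (xq)^{da} U_{dk+e, d(k-a)+e}(xq) + (xq)^{da+d} U_{dk+e, d(k-a-1)+e}(xq)`.
(Note `d(a-1) + d = da`, and `d(k-a-1)+e` is expressed via truncated subtraction, which
is harmless since `U_{dk+e, M} = 0` for all `M ≤ 0`.) -/
theorem Ubar_functional_equation (d k e a : ℕ) (hd : 1 ≤ d) (hk : 1 ≤ k) (hak : a ≤ k)
    (he1 : 1 ≤ e) (hed : e ≤ d)
    (x q : ℂ) (hx : ‖x‖ ≤ 1) (hq : ‖q‖ < 1) :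
    UbarGf d (d * k + e) (d * a + d) x q - UbarGf d (d * k + e) (d * a) x q
      = (x * q) ^ (d * a) * Ugf d (d * k + e) (d * (k - a) + e) (x * q) q
        + (x * q) ^ (d * a + d) * Ugf d (d * k + e) (d * (k - a) + e - d) (x * q) q := by
  have hN : d * (k - a) + e = d * k + e - d * a := by
    rw [Nat.mul_sub, Nat.sub_add_comm (Nat.mul_le_mul_left d hak)]
  rw [hN, Nat.sub_sub]
  exact Ubar_functional_equation_general d (d * k + e) a hd x q hq
end
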